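/- Let S be a finite set, F a nonempty family of subsets of S, and x ∈ S such that some member of F contains x and some member of F does not contain x. Fix an assignment w0 of integer weights to the elements of S \ {x}, and for an integer v let w_v denote the weight function extending w0 with w_v(x) = v. Then there is at most one integer v for which min{ w_v(A) : A ∈ F, x ∈ A } = min{ w_v(B) : B ∈ F, x ∉ B }. (In words: for fixed weights on the other elements, at most one choice of weight for x makes x 'ambiguous' in the sense that both a minimum-weight set containing x and a minimum-weight set avoiding x exist.) -/

import Mathlib

/-- `m` is the minimum of the weights `∑ y ∈ A, w y` of the members `A` of the family `G`. It is
a relation between `G` and `m` because the minimum need not exist when `G` is empty or infinite. -/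
def IsMinWeight {α M : Type*} [AddCommMonoid M] [LE M]
    (G : Set (Finset α)) (w : α → M) (m : M) : Prop :=
  IsLeast ((fun A => ∑ y ∈ A, w y) '' G) m

/-- The element `x` is ambiguous for the family `F` under the weights `w`: the members containing
`x` and the members avoiding `x` both have a minimum weight, and these two minima agree. -/
def IsAmbiguous {α M : Type*} [AddCommMonoid M] [LE M]
    (F : Set (Finset α)) (w : α → M) (x : α) : Prop :=
  ∃ m, IsMinWeight {A ∈ F | x ∈ A} w m ∧ IsMinWeight {A ∈ F | x ∉ A} w m

theorem isLeast_image_add_left_iff {M : Type*} [Add M] [LE M] [AddLeftMono M]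
    [AddLeftReflectLE M] {s : Set M} {v m : M} :
    IsLeast ((v + ·) '' s) m ↔ ∃ c, IsLeast s c ∧ v + c = m := by
  constructor
  · rintro ⟨⟨c, hc, rfl⟩, hle⟩
    exact ⟨c, ⟨hc, fun a ha => le_of_add_le_add_left (hle ⟨a, ha, rfl⟩)⟩, rfl⟩
  · rintro ⟨c, ⟨hc, hle⟩, rfl⟩
    exact ⟨⟨c, hc, rfl⟩, Set.forall_mem_image.2 fun a ha => add_le_add_right (hle ha) v⟩

section Update

variable {α M : Type*} [DecidableEq α] [AddCommMonoid M] {G : Set (Finset α)} {x : α}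

theorem isMinWeight_update_iff_of_mem [LE M] [AddLeftMono M] [AddLeftReflectLE M]
    (hx : ∀ A ∈ G, x ∈ A) (w : α → M) (v m : M) :
    IsMinWeight G (Function.update w x v) m ↔
      ∃ c, IsMinWeight ((·.erase x) '' G) w c ∧ v + c = m := by
  have weights_eq : (fun A => ∑ y ∈ A, Function.update w x v y) '' G =
      (v + ·) '' ((fun A => ∑ y ∈ A, w y) '' ((·.erase x) '' G)) := by
    simp only [Set.image_image, Finset.erase_eq]
    exact Set.image_congr fun A hA => Finset.sum_update_of_mem (hx A hA) w v
  rw [IsMinWeight, weights_eq, isLeast_image_add_left_iff]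
  rfl

theorem isMinWeight_update_iff_of_notMem [LE M] (hx : ∀ A ∈ G, x ∉ A) (w : α → M) (v m : M) :
    IsMinWeight G (Function.update w x v) m ↔ IsMinWeight G w m := by
  have weights_eq : (fun A => ∑ y ∈ A, Function.update w x v y) '' G =
      (fun A => ∑ y ∈ A, w y) '' G :=
    Set.image_congr fun A hA => Finset.sum_update_of_notMem (hx A hA) w v
  rw [IsMinWeight, weights_eq, IsMinWeight]

end Update

theorem isMinWeight_coe_iff_inf'_eq {α M : Type*} [AddCommMonoid M] [LinearOrder M]
    {G : Finset (Finset α)} (hG : G.Nonempty) (w : α → M) (m : M) :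
    IsMinWeight (G : Set (Finset α)) w m ↔ G.inf' hG (fun A => ∑ y ∈ A, w y) = m := by
  have inf'_isMinWeight : IsMinWeight (G : Set (Finset α)) w (G.inf' hG fun A => ∑ y ∈ A, w y) := by
    obtain ⟨A, hA, hmin⟩ := G.exists_mem_eq_inf' hG fun A => ∑ y ∈ A, w y
    exact ⟨⟨A, hA, hmin.symm⟩, Set.forall_mem_image.2 fun B hB => Finset.inf'_le _ hB⟩
  exact ⟨inf'_isMinWeight.unique, fun h => h ▸ inf'_isMinWeight⟩

theorem isAmbiguous_coe_iff_inf'_eq {α M : Type*} [DecidableEq α] [AddCommMonoid M]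
    [LinearOrder M] {F : Finset (Finset α)} {x : α}
    (hmem : (F.filter (fun A => x ∈ A)).Nonempty)
    (hnotMem : (F.filter (fun A => x ∉ A)).Nonempty) (w : α → M) :
    IsAmbiguous (F : Set (Finset α)) w x ↔
      (F.filter (fun A => x ∈ A)).inf' hmem (fun A => ∑ y ∈ A, w y) =
        (F.filter (fun A => x ∉ A)).inf' hnotMem (fun B => ∑ y ∈ B, w y) := by
  simp only [IsAmbiguous, Finset.mem_coe, ← Finset.coe_filter, isMinWeight_coe_iff_inf'_eq hmem,
    isMinWeight_coe_iff_inf'_eq hnotMem, exists_eq_left']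
  exact eq_comm

theorem stmt1_general {α M : Type*} [DecidableEq α] [AddCommMonoid M] [PartialOrder M]
    [IsOrderedCancelAddMonoid M] (F : Set (Finset α)) (x : α) (w : α → M) :
    {v | IsAmbiguous F (Function.update w x v) x}.Subsingleton := by
  rintro v₁ ⟨m₁, hmem₁, hnotMem₁⟩ v₂ ⟨m₂, hmem₂, hnotMem₂⟩
  rw [isMinWeight_update_iff_of_mem fun A hA => hA.2] at hmem₁ hmem₂
  rw [isMinWeight_update_iff_of_notMem fun A hA => hA.2] at hnotMem₁ hnotMem₂
  obtain ⟨c, hc, rfl⟩ := hmem₁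
  obtain ⟨c', hc', rfl⟩ := hmem₂
  obtain rfl : c = c' := hc.unique hc'
  exact add_right_cancel (hnotMem₁.unique hnotMem₂)

/-- Key counting step of the Isolating Lemma: for fixed integer weights `w0` on the
elements other than `x`, there is at most one integer value `v` for the weight of `x`
(giving the weight function `Function.update w0 x v`) such that the minimum weight of a
member of `F` containing `x` equals the minimum weight of a member of `F` avoiding `x`. -/
theorem stmt1 {α : Type*} [DecidableEq α] (F : Finset (Finset α)) (x : α)
    (h1 : (F.filter (fun A => x ∈ A)).Nonempty)
    (h2 : (F.filter (fun A => x ∉ A)).Nonempty)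
    (w0 : α → ℤ) :
    ∀ v₁ v₂ : ℤ,
      ((F.filter (fun A => x ∈ A)).inf' h1
          (fun A => ∑ y ∈ A, Function.update w0 x v₁ y) =
        (F.filter (fun A => x ∉ A)).inf' h2
          (fun B => ∑ y ∈ B, Function.update w0 x v₁ y)) →
      ((F.filter (fun A => x ∈ A)).inf' h1
          (fun A => ∑ y ∈ A, Function.update w0 x v₂ y) =
        (F.filter (fun A => x ∉ A)).inf' h2
          (fun B => ∑ y ∈ B, Function.update w0 x v₂ y)) →
      v₁ = v₂ := by
  intro v₁ v₂ h₁ h₂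
  exact stmt1_general (F : Set (Finset α)) x w0
    ((isAmbiguous_coe_iff_inf'_eq h1 h2 _).2 h₁) ((isAmbiguous_coe_iff_inf'_eq h1 h2 _).2 h₂)
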